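/- Let A be a unital C*-algebra, let I be a countable index set, and for each i ∈ I let π_i : A → B(H_i) and θ_i : A → B(K_i) be unital representations with π_i ≺ θ_i. Then ⊕_{i∈I} π_i ≺ ⊕_{i∈I} θ_i, where the direct sums act on the Hilbert space direct sums ⊕_{i∈I} H_i and ⊕_{i∈I} K_i respectively. -/

import Mathlib

open scoped InnerProductSpace

noncomputable section

/-- The space of unital representations of `A` on `H`, i.e. unital `*`-homomorphisms
`A → B(H)`. -/
abbrev CRep (A H : Type*) [CStarAlgebra A] [NormedAddCommGroup H]
    [InnerProductSpace ℂ H] [CompleteSpace H] : Type _ :=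
  A →⋆ₐ[ℂ] (H →L[ℂ] H)

/-- The point-strong operator topology on `CRep A H`: the topology of pointwise convergence
with `B(H)` carrying the strong operator topology (i.e. pointwise convergence on vectors). -/
instance CRep.instTopologicalSpace (A H : Type*) [CStarAlgebra A] [NormedAddCommGroup H]
    [InnerProductSpace ℂ H] [CompleteSpace H] : TopologicalSpace (CRep A H) :=
  TopologicalSpace.induced (fun π => (fun (a : A) (x : H) => π a x)) inferInstance

/-- A closed subspace `K` is invariant under a unital representation `π`. -/
def CRepInvariant {A H : Type*} [CStarAlgebra A] [NormedAddCommGroup H]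
    [InnerProductSpace ℂ H] [CompleteSpace H]
    (π : CRep A H) (K : Submodule ℂ H) : Prop :=
  ∀ a : A, ∀ x ∈ K, π a x ∈ K

/-- A unital representation is weakly mixing if it admits no nonzero finite-dimensional
closed invariant subspace. -/
def CRepWeaklyMixing {A H : Type*} [CStarAlgebra A] [NormedAddCommGroup H]
    [InnerProductSpace ℂ H] [CompleteSpace H]
    (π : CRep A H) : Prop :=
  ∀ K : Submodule ℂ H, IsClosed (K : Set H) → FiniteDimensional ℂ K →
    CRepInvariant π K → K = ⊥

/-- A unital representation is irreducible if its only closed invariant subspaces are `⊥`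
and the whole space. -/
def CRepIrreducible {A H : Type*} [CStarAlgebra A] [NormedAddCommGroup H]
    [InnerProductSpace ℂ H] [CompleteSpace H] (π : CRep A H) : Prop :=
  ∀ K : Submodule ℂ H, IsClosed (K : Set H) → (∀ a : A, ∀ x ∈ K, π a x ∈ K) →
    K = ⊥ ∨ K = ⊤

/-- The weak containment relation `π ≺ ρ`. -/
def CRepPrec {A H K : Type*} [CStarAlgebra A] [NormedAddCommGroup H]
    [InnerProductSpace ℂ H] [CompleteSpace H] [NormedAddCommGroup K]
    [InnerProductSpace ℂ K] [CompleteSpace K]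
    (π : CRep A H) (ρ : CRep A K) : Prop :=
  ∀ (Ω : Finset A) (n : ℕ) (ξ : Fin n → H), Orthonormal ℂ ξ → ∀ ε : ℝ, 0 < ε →
    ∃ ζ : Fin n → K, Orthonormal ℂ ζ ∧
      ∀ a ∈ Ω, ∀ i : Fin n, ‖⟪π a (ξ i), ξ i⟫_ℂ - ⟪ρ a (ζ i), ζ i⟫_ℂ‖ < ε


/-- `σ` realizes the Hilbert space direct sum of the family of representations `ρ i` via the
isometries `u i`: the ranges of the `u i` are pairwise orthogonal with dense span, and each
`u i` intertwines `ρ i` with `σ`. -/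
def IsDirectSumRep {A K : Type*} [CStarAlgebra A] [NormedAddCommGroup K]
    [InnerProductSpace ℂ K] [CompleteSpace K]
    {ι : Type*} {Hs : ι → Type*} [∀ i, NormedAddCommGroup (Hs i)]
    [∀ i, InnerProductSpace ℂ (Hs i)] [∀ i, CompleteSpace (Hs i)]
    (σ : CRep A K) (ρ : ∀ i, CRep A (Hs i))
    (u : ∀ i, Hs i →ₗᵢ[ℂ] K) : Prop :=
  (∀ i j, i ≠ j → ∀ (x : Hs i) (y : Hs j), ⟪u i x, u j y⟫_ℂ = 0) ∧
  (⨆ i, LinearMap.range (u i).toLinearMap).topologicalClosure = ⊤ ∧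
  (∀ i (a : A) (x : Hs i), σ a (u i x) = u i (ρ i a x))

open Filter Topology

section Approximation

theorem Filter.Tendsto.curry_nhds {α β X : Type*} [TopologicalSpace X]
    {l : Filter α} {m : Filter β} {f : α → β → X} {g : α → X} {c : X}
    (hf : ∀ a, Tendsto (f a) m (𝓝 (g a))) (hg : Tendsto g l (𝓝 c)) :
    Tendsto (fun p : α × β => f p.1 p.2) (l.curry m) (𝓝 c) := by
  rw [tendsto_nhds]
  intro s hs hc
  refine eventually_curry_iff.2 ?_
  filter_upwards [hg.eventually (hs.mem_nhds hc)] with a ha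
  exact (hf a).eventually (hs.mem_nhds ha)

theorem Filter.NeBot.curry {α β : Type*} {l : Filter α} {m : Filter β}
    (hl : l.NeBot) (hm : m.NeBot) : (l.curry m).NeBot := by
  refine ⟨fun h => ?_⟩
  have : ∀ᶠ _ in l.curry m, False := by rw [h]; exact eventually_bot
  rw [eventually_curry_iff] at this
  obtain ⟨a, ha⟩ := this.exists
  exact ha.exists.elim fun _ => id

variable {A H K : Type*} [CStarAlgebra A]
  [NormedAddCommGroup H] [InnerProductSpace ℂ H] [CompleteSpace H]
  [NormedAddCommGroup K] [InnerProductSpace ℂ K] [CompleteSpace K]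

theorem CRep.inner_apply_left (π : CRep A H) (a : A) (x y : H) :
    ⟪π a x, y⟫_ℂ = ⟪x, π (star a) y⟫_ℂ := by
  rw [map_star, ContinuousLinearMap.star_eq_adjoint, ContinuousLinearMap.adjoint_inner_right]

theorem CRep.norm_sq_apply (π : CRep A H) (a : A) (x : H) :
    ⟪x, π (star a * a) x⟫_ℂ = (‖π a x‖ : ℂ) ^ 2 := by
  rw [map_mul, mul_apply_eq_comp, ← CRep.inner_apply_left, inner_self_eq_norm_sq_to_K]
  rfl

/-- All matrix coefficients of `π` along the vectors in `S` are simultaneously limits of the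
corresponding matrix coefficients of `θ`. -/
def CRepApproxOn (π : CRep A H) (θ : CRep A K) (S : Set H) : Prop :=
  ∃ l : Filter (H → K), l.NeBot ∧ ∀ a, ∀ x ∈ S, ∀ x' ∈ S,
    Tendsto (fun y => ⟪y x, θ a (y x')⟫_ℂ) l (𝓝 ⟪x, π a x'⟫_ℂ)

variable {π : CRep A H} {θ : CRep A K} {S T : Set H}

theorem CRepApproxOn.of_tendsto {τ : Type*} {l : Filter τ} (hl : l.NeBot) (y : τ → H → K)
    (h : ∀ a, ∀ x ∈ S, ∀ x' ∈ S,
      Tendsto (fun t => ⟪y t x, θ a (y t x')⟫_ℂ) l (𝓝 ⟪x, π a x'⟫_ℂ)) :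
    CRepApproxOn π θ S :=
  ⟨l.map y, hl.map y, fun a x hx x' hx' => tendsto_map'_iff.2 (h a x hx x' hx')⟩

theorem CRepApproxOn.mono (h : CRepApproxOn π θ T) (hST : S ⊆ T) : CRepApproxOn π θ S := by
  obtain ⟨l, hl, h⟩ := h
  exact ⟨l, hl, fun a x hx x' hx' => h a x (hST hx) x' (hST hx')⟩

theorem CRepApproxOn.closure (h : CRepApproxOn π θ S) : CRepApproxOn π θ (closure S) := by
  classical
  obtain ⟨l, hl, h⟩ := h
  have key : ∀ x, ∃ s : ℕ → H, x ∈ _root_.closure S →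
      (∀ m, s m ∈ S) ∧ Tendsto s atTop (𝓝 x) := by
    intro x
    by_cases hx : x ∈ _root_.closure S
    · obtain ⟨s, hs⟩ := mem_closure_iff_seq_limit.1 hx
      exact ⟨s, fun _ => hs⟩
    · exact ⟨fun _ => x, fun hx' => absurd hx' hx⟩
  choose s hs using key
  refine .of_tendsto (Filter.NeBot.curry (l := (atTop : Filter ℕ)) atTop_neBot hl)
    (fun p x => p.2 (s x p.1)) fun a x hx x' hx' => ?_
  have hlim : Tendsto (fun m => ⟪s x m, π a (s x' m)⟫_ℂ) atTop (𝓝 ⟪x, π a x'⟫_ℂ) :=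
    (hs x hx).2.inner (((π a).continuous.tendsto x').comp (hs x' hx').2)
  exact Tendsto.curry_nhds (f := fun m (y : H → K) => ⟪y (s x m), θ a (y (s x' m))⟫_ℂ)
    (fun m => h a _ ((hs x hx).1 m) _ ((hs x' hx').1 m)) hlim

/-- The closed invariant subspace generated by a set of vectors. -/
def CRep.cyclicHull (π : CRep A H) (S : Set H) : Submodule ℂ H :=
  (Submodule.span ℂ {z | ∃ b, ∃ s ∈ S, π b s = z}).topologicalClosure

theorem CRep.subset_cyclicHull (π : CRep A H) (S : Set H) : S ⊆ π.cyclicHull S := fun s hs =>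
  Submodule.le_topologicalClosure _ (Submodule.subset_span ⟨1, s, hs, by simp⟩)

theorem CRep.cyclicHull_le (π : CRep A H) {S : Set H} {M : Submodule ℂ H}
    (hM : IsClosed (M : Set H)) (h : ∀ b, ∀ s ∈ S, π b s ∈ M) : π.cyclicHull S ≤ M :=
  Submodule.topologicalClosure_minimal _
    (Submodule.span_le.2 fun _ ⟨b, s, hs, hz⟩ => hz ▸ h b s hs) hM

theorem CRep.isClosed_cyclicHull (π : CRep A H) (S : Set H) :
    IsClosed (π.cyclicHull S : Set H) :=
  Submodule.isClosed_topologicalClosure _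

theorem CRep.apply_mem_cyclicHull (π : CRep A H) {S : Set H} (a : A) {x : H}
    (hx : x ∈ π.cyclicHull S) : π a x ∈ π.cyclicHull S := by
  have hM : IsClosed (((π.cyclicHull S).comap (π a : H →ₗ[ℂ] H) : Submodule ℂ H) : Set H) :=
    (π.isClosed_cyclicHull S).preimage (π a).continuous
  refine π.cyclicHull_le hM (fun b s hs => ?_) hx
  refine Submodule.le_topologicalClosure _ (Submodule.subset_span ⟨a * b, s, hs, ?_⟩)
  simp

theorem CRepApproxOn.cyclicHull (h : CRepApproxOn π θ S) :
    CRepApproxOn π θ (π.cyclicHull S : Set H) := by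
  classical
  rw [CRep.cyclicHull, Submodule.topologicalClosure_coe]
  refine CRepApproxOn.closure ?_
  obtain ⟨l, hl, h⟩ := h
  have key : ∀ x, ∃ (n : ℕ) (b : Fin n → A) (s : Fin n → H),
      x ∈ Submodule.span ℂ {z | ∃ b, ∃ s ∈ S, π b s = z} →
        (∀ i, s i ∈ S) ∧ x = ∑ i, π (b i) (s i) := by
    intro x
    by_cases hx : x ∈ Submodule.span ℂ {z | ∃ b, ∃ s ∈ S, π b s = z}
    · obtain ⟨n, f, g, hfg⟩ := Submodule.mem_span_set'.1 hx
      choose b s hs hb using fun i => (g i).2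
      refine ⟨n, fun i => f i • b i, s, fun _ => ⟨hs, ?_⟩⟩
      rw [← hfg]
      simp [hb]
    · exact ⟨0, Fin.elim0, Fin.elim0, fun hx' => absurd hx' hx⟩
  choose n b s hs using key
  refine .of_tendsto hl (fun y x => ∑ i, θ (b x i) (y (s x i))) fun a x hx x' hx' => ?_
  have hlim : ⟪x, π a x'⟫_ℂ =
      ∑ i, ∑ j, ⟪s x i, π (star (b x i) * a * b x' j) (s x' j)⟫_ℂ := by
    conv_lhs => rw [(hs x hx).2, (hs x' hx').2]
    simp only [sum_inner, map_sum, inner_sum, CRep.inner_apply_left, map_mul, mul_apply_eq_comp]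
    exact Finset.sum_comm
  have hfun : ∀ y : H → K, ⟪∑ i, θ (b x i) (y (s x i)), θ a (∑ j, θ (b x' j) (y (s x' j)))⟫_ℂ =
        ∑ i, ∑ j, ⟪y (s x i), θ (star (b x i) * a * b x' j) (y (s x' j))⟫_ℂ := fun y => by
    simp only [sum_inner, map_sum, inner_sum, CRep.inner_apply_left, map_mul, mul_apply_eq_comp]
    exact Finset.sum_comm
  rw [hlim]
  simp only [hfun]
  exact tendsto_finsetSum _ fun i _ => tendsto_finsetSum _ fun j _ =>
    h _ _ ((hs x hx).1 i) _ ((hs x' hx').1 j)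

theorem CRepApproxOn.insert (h : CRepApproxOn π θ S) {v : H}
    (horth : ∀ a, ∀ x ∈ S, ⟪x, π a v⟫_ℂ = 0) {m : Filter K} (hm : m.NeBot)
    (hnull : ∀ k, Tendsto (fun z => ⟪k, z⟫_ℂ) m (𝓝 0))
    (hlim : ∀ a, Tendsto (fun z => ⟪z, θ a z⟫_ℂ) m (𝓝 ⟪v, π a v⟫_ℂ)) :
    CRepApproxOn π θ (insert v S) := by
  classical
  by_cases hvS : v ∈ S
  · rwa [Set.insert_eq_of_mem hvS]
  obtain ⟨l, hl, h⟩ := h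
  have hnull' : ∀ k, Tendsto (fun z => ⟪z, k⟫_ℂ) m (𝓝 0) := fun k => by
    have := (Complex.continuous_conj.tendsto 0).comp (hnull k)
    simpa [Function.comp_def] using this
  have horth' : ∀ a, ∀ x ∈ S, ⟪v, π a x⟫_ℂ = 0 := fun a x hx => by
    rw [← inner_conj_symm, CRep.inner_apply_left, horth _ x hx, map_zero]
  have hne : ∀ x ∈ S, x ≠ v := fun x hx hxv => hvS (hxv ▸ hx)
  refine .of_tendsto (Filter.NeBot.curry hl hm) (fun p => Function.update p.1 v p.2) ?_
  rintro a x (rfl | hx) x' (rfl | hx')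
  · simp only [Function.update_self]
    exact Tendsto.curry_nhds (f := fun (_ : H → K) z => ⟪z, θ a z⟫_ℂ) (fun _ => hlim a)
      tendsto_const_nhds
  · simp only [Function.update_self, Function.update_of_ne (hne x' hx'), horth' a x' hx']
    exact Tendsto.curry_nhds (f := fun (y : H → K) z => ⟪z, θ a (y x')⟫_ℂ) (fun _ => hnull' _)
      tendsto_const_nhds
  · simp only [Function.update_self, Function.update_of_ne (hne x hx), horth a x hx]
    refine Tendsto.curry_nhds (f := fun (y : H → K) z => ⟪y x, θ a z⟫_ℂ) (g := fun _ => 0)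
      (fun y => ?_) tendsto_const_nhds
    simpa [CRep.inner_apply_left] using hnull (θ (star a) (y x))
  · simp only [Function.update_of_ne (hne x hx), Function.update_of_ne (hne x' hx')]
    exact Tendsto.curry_nhds (f := fun (y : H → K) _ => ⟪y x, θ a (y x')⟫_ℂ)
      (fun _ => tendsto_const_nhds) (h a x hx x' hx')

end Approximation

section SingularFunctionals

variable {A H K : Type*} [CStarAlgebra A]
  [NormedAddCommGroup H] [InnerProductSpace ℂ H] [CompleteSpace H]
  [NormedAddCommGroup K] [InnerProductSpace ℂ K] [CompleteSpace K]

theorem CRep.norm_inner_apply_le (θ : CRep A K) (z : K) (a : A) :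
    ‖⟪z, θ a z⟫_ℂ‖ ≤ ‖z‖ ^ 2 * ‖a‖ :=
  calc ‖⟪z, θ a z⟫_ℂ‖ ≤ ‖z‖ * ‖θ a z‖ := norm_inner_le_norm _ _
    _ ≤ ‖z‖ * (‖a‖ * ‖z‖) := by
      gcongr
      exact (θ a).le_of_opNorm_le (NonUnitalStarAlgHom.norm_apply_le θ a) z
    _ = ‖z‖ ^ 2 * ‖a‖ := by ring

/-- The positive functional `a ↦ ⟪z, θ a z⟫` as a point of the weak-* dual. -/
def CRep.vectorFunctional (θ : CRep A K) (z : K) : WeakDual ℂ A :=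
  StrongDual.toWeakDual <| LinearMap.mkContinuous
    { toFun := fun a => ⟪z, θ a z⟫_ℂ
      map_add' := fun a b => by simp
      map_smul' := fun c a => by simp } (‖z‖ ^ 2) (θ.norm_inner_apply_le z)

@[simp]
theorem CRep.vectorFunctional_apply (θ : CRep A K) (z : K) (a : A) :
    θ.vectorFunctional z a = ⟪z, θ a z⟫_ℂ := rfl

theorem CRep.norm_vectorFunctional_le (θ : CRep A K) (z : K) :
    ‖WeakDual.toStrongDual (θ.vectorFunctional z)‖ ≤ ‖z‖ ^ 2 :=
  LinearMap.mkContinuous_norm_le _ (by positivity) (θ.norm_inner_apply_le z)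

theorem WeakDual.tendsto_iff {E τ : Type*} [NormedAddCommGroup E] [NormedSpace ℂ E]
    {l : Filter τ} {f : τ → WeakDual ℂ E} {φ : WeakDual ℂ E} :
    Tendsto f l (𝓝 φ) ↔ ∀ a, Tendsto (fun t => f t a) l (𝓝 (φ a)) :=
  tendsto_iff_forall_eval_tendsto_topDualPairing

/-- The limits of vector functionals of `θ` along weakly null nets of vectors. -/
def CRep.singularCone (θ : CRep A K) : Set (WeakDual ℂ A) :=
  {φ | ∃ m : Filter K, m.NeBot ∧ (∀ k, Tendsto (fun z => ⟪k, z⟫_ℂ) m (𝓝 0)) ∧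
    Tendsto θ.vectorFunctional m (𝓝 φ)}

theorem CRep.mem_singularCone_of_tendsto (θ : CRep A K) {τ : Type*} {l : Filter τ} (hl : l.NeBot)
    {z : τ → K} {φ : WeakDual ℂ A} (hz : ∀ k, Tendsto (fun t => ⟪k, z t⟫_ℂ) l (𝓝 0))
    (hφ : ∀ a, Tendsto (fun t => ⟪z t, θ a (z t)⟫_ℂ) l (𝓝 (φ a))) : φ ∈ θ.singularCone :=
  ⟨l.map z, hl.map z, fun k => tendsto_map'_iff.2 (hz k),
    tendsto_map'_iff.2 (WeakDual.tendsto_iff.2 hφ)⟩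

theorem CRep.isClosed_singularCone (θ : CRep A K) : IsClosed θ.singularCone := by
  let Ψ : K → WeakDual ℂ A × (K → ℂ) := fun z => (θ.vectorFunctional z, fun k => ⟪k, z⟫_ℂ)
  have h : θ.singularCone = (fun φ => (φ, (0 : K → ℂ))) ⁻¹' closure (Set.range Ψ) := by
    ext φ
    constructor
    · rintro ⟨m, hm, hnull, hφ⟩
      have hΨ : Tendsto Ψ m (𝓝 (φ, 0)) :=
        hφ.prodMk_nhds (tendsto_pi_nhds.2 hnull)
      exact mem_closure_of_tendsto hΨ (Eventually.of_forall fun z => ⟨z, rfl⟩)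
    · intro hφ
      have hm : (comap Ψ (𝓝 (φ, 0))).NeBot := by
        rw [comap_neBot_iff_frequently]
        exact mem_closure_iff_frequently.1 hφ
      have hΨ : Tendsto Ψ (comap Ψ (𝓝 (φ, 0))) (𝓝 (φ, 0)) := tendsto_comap
      exact ⟨_, hm, tendsto_pi_nhds.1 ((continuous_snd.tendsto _).comp hΨ),
        (continuous_fst.tendsto _).comp hΨ⟩
  rw [h]
  exact isClosed_closure.preimage (by fun_prop)

theorem CRep.zero_mem_singularCone (θ : CRep A K) : 0 ∈ θ.singularCone :=
  θ.mem_singularCone_of_tendsto (l := (pure () : Filter Unit)) inferInstance (z := fun _ => 0)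
    (fun k => by simp) fun a => by
      simp only [map_zero, inner_zero_left]
      exact tendsto_const_nhds

theorem CRep.smul_mem_singularCone (θ : CRep A K) {φ : WeakDual ℂ A} (hφ : φ ∈ θ.singularCone)
    {r : ℝ} (hr : 0 ≤ r) : r • φ ∈ θ.singularCone := by
  obtain ⟨m, hm, hnull, hφ⟩ := hφ
  rw [WeakDual.tendsto_iff] at hφ
  refine θ.mem_singularCone_of_tendsto hm (z := fun z => (√r : ℂ) • z) (fun k => ?_) fun a => ?_
  · simpa [inner_smul_right] using (hnull k).const_mul (√r : ℂ)
  · have h : ∀ z, ⟪(√r : ℂ) • z, θ a ((√r : ℂ) • z)⟫_ℂ = (r : ℂ) * ⟪z, θ a z⟫_ℂ := fun z => by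
      rw [map_smul, inner_smul_left, inner_smul_right, ← mul_assoc, Complex.conj_ofReal,
        ← Complex.ofReal_mul, Real.mul_self_sqrt hr]
    have h' : (r • φ) a = (r : ℂ) * φ a := Complex.real_smul
    simp only [h, h']
    exact (hφ a).const_mul (r : ℂ)

theorem CRep.add_mem_singularCone (θ : CRep A K) {φ ψ : WeakDual ℂ A}
    (hφ : φ ∈ θ.singularCone) (hψ : ψ ∈ θ.singularCone) : φ + ψ ∈ θ.singularCone := by
  obtain ⟨m, hm, hnull, hφ⟩ := hφ
  obtain ⟨m', hm', hnull', hψ⟩ := hψ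
  rw [WeakDual.tendsto_iff] at hφ hψ
  have hnull'' : ∀ k, Tendsto (fun z => ⟪z, k⟫_ℂ) m' (𝓝 0) := fun k => by
    have := (Complex.continuous_conj.tendsto 0).comp (hnull' k)
    simpa [Function.comp_def] using this
  refine θ.mem_singularCone_of_tendsto (hm.curry hm') (z := fun p => p.1 + p.2)
    (fun k => ?_) fun a => ?_
  · refine Tendsto.curry_nhds (f := fun x y : K => ⟪k, x + y⟫_ℂ) (g := fun x => ⟪k, x⟫_ℂ)
      (fun x => ?_) (hnull k)
    simpa [inner_add_right] using (hnull' k).const_add ⟪k, x⟫_ℂ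
  · refine Tendsto.curry_nhds (f := fun x y : K => ⟪x + y, θ a (x + y)⟫_ℂ)
      (g := fun x => ⟪x, θ a x⟫_ℂ + ψ a) (fun x => ?_) ((hφ a).add_const (ψ a))
    have h := ((hnull' (θ (star a) x)).const_add ⟪x, θ a x⟫_ℂ).add
      ((hnull'' (θ a x)).add (hψ a))
    simpa [inner_add_left, inner_add_right, CRep.inner_apply_left, add_assoc, add_left_comm]
      using h

theorem CRep.convex_singularCone (θ : CRep A K) : Convex ℝ θ.singularCone :=
  fun _ hφ _ hψ _ _ hs ht _ =>
    θ.add_mem_singularCone (θ.smul_mem_singularCone hφ hs) (θ.smul_mem_singularCone hψ ht)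

theorem CRep.exists_finset_of_singularCone_le_zero (θ : CRep A K) (a : A)
    (ha : ∀ φ ∈ θ.singularCone, (φ a).re ≤ 0) {s : ℝ} (hs : 0 < s) :
    ∃ F : Finset K, ∀ z, (∀ k ∈ F, ⟪k, z⟫_ℂ = 0) → (⟪z, θ a z⟫_ℂ).re ≤ s * ‖z‖ ^ 2 := by
  classical
  by_contra! hcon
  have key : ∀ F : Finset K, ∃ z, (∀ k ∈ F, ⟪k, z⟫_ℂ = 0) ∧ ‖z‖ = 1 ∧ s ≤ (⟪z, θ a z⟫_ℂ).re := by
    intro F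
    obtain ⟨z, hz, hlt⟩ := hcon F
    have hz0 : z ≠ 0 := by
      rintro rfl
      simp at hlt
    have hn : 0 < ‖z‖ := norm_pos_iff.2 hz0
    refine ⟨((‖z‖⁻¹ : ℝ) : ℂ) • z, fun k hk => ?_, ?_, ?_⟩
    · rw [inner_smul_right, hz k hk, mul_zero]
    · rw [norm_smul]
      simp [hn.ne']
    · rw [map_smul, inner_smul_left, inner_smul_right, ← mul_assoc, Complex.conj_ofReal,
        ← Complex.ofReal_mul, Complex.re_ofReal_mul]
      calc s = ‖z‖⁻¹ * ‖z‖⁻¹ * (s * ‖z‖ ^ 2) := by field_simp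
        _ ≤ _ := by gcongr
  choose z hz hz1 hzs using key
  let U : Ultrafilter (Finset K) := Ultrafilter.of atTop
  have hU : (U : Filter (Finset K)) ≤ atTop := Ultrafilter.of_le _
  obtain ⟨φ, -, hφ⟩ := (WeakDual.isCompact_closedBall (0 : StrongDual ℂ A) 1).ultrafilter_le_nhds
    (U.map fun F => θ.vectorFunctional (z F)) <| by
      refine le_principal_iff.2 (Ultrafilter.mem_map.2 (Eventually.of_forall fun F => ?_))
      have := θ.norm_vectorFunctional_le (z F)
      simpa [hz1 F] using this
  have hφ' : ∀ b, Tendsto (fun F => ⟪z F, θ b (z F)⟫_ℂ) U (𝓝 (φ b)) :=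
    WeakDual.tendsto_iff.1 (show Tendsto (fun F => θ.vectorFunctional (z F)) U (𝓝 φ) from hφ)
  have hmem : φ ∈ θ.singularCone := by
    refine θ.mem_singularCone_of_tendsto U.neBot (z := z) (fun k => ?_) hφ'
    refine Tendsto.congr' (f₁ := fun _ => (0 : ℂ)) (hU ?_) tendsto_const_nhds
    change ∀ᶠ F in atTop, (0 : ℂ) = ⟪k, z F⟫_ℂ
    filter_upwards [eventually_ge_atTop {k}] with F hF
    exact (hz F k (by simpa using hF)).symm
  have hge : s ≤ (φ a).re :=
    ge_of_tendsto ((Complex.continuous_re.tendsto _).comp (hφ' a)) (Eventually.of_forall hzs)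
  linarith [ha φ hmem]

/-- `θ b` has finite rank. -/
def CRep.FiniteRank (θ : CRep A K) (b : A) : Prop :=
  FiniteDimensional ℂ (LinearMap.range (θ b : K →ₗ[ℂ] K))

/-- A selfadjoint element is a difference of squares of two selfadjoint elements with product
zero. -/
theorem IsSelfAdjoint.exists_sq_sub_sq {b : A} (hb : IsSelfAdjoint b) :
    ∃ e d : A, IsSelfAdjoint e ∧ IsSelfAdjoint d ∧ d * e = 0 ∧ b = e * e - d * d := by
  refine ⟨cfc (fun x : ℝ => √x) b, cfc (fun x : ℝ => √(-x)) b, cfc_predicate _ b,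
    cfc_predicate _ b, ?_, ?_⟩
  · rw [← cfc_mul _ _ b, ← cfc_const_zero ℝ b]
    refine cfc_congr fun x _ => ?_
    rcases le_total x 0 with hx | hx
    · simp [Real.sqrt_eq_zero_of_nonpos hx]
    · simp [Real.sqrt_eq_zero_of_nonpos (neg_nonpos.2 hx)]
  · rw [← cfc_mul _ _ b, ← cfc_mul _ _ b, ← cfc_sub _ _ b]
    conv_lhs => rw [← cfc_id' ℝ b]
    refine cfc_congr fun x _ => ?_
    rcases le_total x 0 with hx | hx
    · simp [Real.sqrt_eq_zero_of_nonpos hx, Real.mul_self_sqrt (neg_nonneg.2 hx)]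
    · simp [Real.sqrt_eq_zero_of_nonpos (neg_nonpos.2 hx), Real.mul_self_sqrt hx]

theorem CRep.finiteRank_of_forall_inner_eq_zero (θ : CRep A K) {e : A} (F : Finset K)
    (h : ∀ x, (∀ k ∈ F, ⟪k, θ e x⟫_ℂ = 0) → θ e x = 0) : θ.FiniteRank e := by
  let g : K →ₗ[ℂ] (F → ℂ) := LinearMap.pi fun k => (innerSL ℂ (k : K) : K →ₗ[ℂ] ℂ)
  refine FiniteDimensional.of_injective
    (g.comp (LinearMap.range (θ e : K →ₗ[ℂ] K)).subtype) ?_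
  rw [injective_iff_map_eq_zero]
  rintro ⟨_, x, rfl⟩ hx
  refine Subtype.ext (h x fun k hk => ?_)
  simpa [g] using congrFun hx ⟨k, hk⟩

theorem CRep.re_inner_add_star_sub (ρ : CRep A K) (a : A) (s : ℝ) (x : K) :
    (⟪x, ρ (a + star a - (2 * s : ℂ) • 1) x⟫_ℂ).re =
      2 * (⟪x, ρ a x⟫_ℂ).re - 2 * (s * ‖x‖ ^ 2) := by
  have h1 : ⟪x, ρ (star a) x⟫_ℂ = starRingEnd ℂ ⟪x, ρ a x⟫_ℂ := by
    rw [← CRep.inner_apply_left, inner_conj_symm]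
  have h2 : ⟪x, x⟫_ℂ = ((‖x‖ ^ 2 : ℝ) : ℂ) := by
    rw [inner_self_eq_norm_sq_to_K]; norm_cast
  have h3 : ⟪x, ρ (a + star a - (2 * s : ℂ) • 1) x⟫_ℂ =
      ⟪x, ρ a x⟫_ℂ + ⟪x, ρ (star a) x⟫_ℂ - ((2 * s * ‖x‖ ^ 2 : ℝ) : ℂ) := by
    simp only [map_sub, map_add, map_smul, map_one, sub_apply, add_apply, smul_apply,
      inner_sub_right, inner_add_right, inner_smul_right, one_apply_eq_self, h2]
    push_cast
    ring
  rw [h3, h1]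
  simp only [Complex.sub_re, Complex.add_re, Complex.conj_re, Complex.ofReal_re]
  ring

theorem IsSelfAdjoint.inner_apply_mul_self {e : A} (he : IsSelfAdjoint e) (ρ : CRep A K) (x : K) :
    ⟪x, ρ (e * e) x⟫_ℂ = ((‖ρ e x‖ ^ 2 : ℝ) : ℂ) := by
  have := ρ.norm_sq_apply e x
  rw [he.star_eq] at this
  exact_mod_cast this

/-- A vector functional of `π` that is annihilated by all elements of finite rank in `θ` is a limit
of vector functionals of `θ` along a weakly null net. -/
theorem CRep.vectorFunctional_mem_singularCone (π : CRep A H) (θ : CRep A K) (v : H)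
    (hv : ∀ b, θ.FiniteRank b → π b v = 0) : π.vectorFunctional v ∈ θ.singularCone := by
  by_contra hmem
  have : LocallyConvexSpace ℝ (WeakDual ℂ A) :=
    inferInstanceAs (LocallyConvexSpace ℝ (WeakBilin (topDualPairing ℂ A)))
  have htower : IsScalarTower ℝ ℂ (WeakDual ℂ A) :=
    ⟨fun r c φ => DFunLike.ext _ _ fun a => smul_assoc r c (φ a)⟩
  obtain ⟨f, u, hfu, huf⟩ := @RCLike.geometric_hahn_banach_closed_point ℂ (WeakDual ℂ A) _ _
    (WeakDual.instModule' ℝ) _ _ _ _ htower _ _ this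
    θ.convex_singularCone θ.isClosed_singularCone hmem
  obtain ⟨a₀, rfl⟩ := (topDualPairing ℂ A).dualEmbedding_surjective f
  have hu : 0 < u := hfu 0 θ.zero_mem_singularCone
  have hle : ∀ φ ∈ θ.singularCone, (φ a₀).re ≤ 0 := by
    intro φ hφ
    by_contra! hpos
    have := hfu _ (θ.smul_mem_singularCone hφ (div_nonneg hu.le hpos.le))
    change (((u / (φ a₀).re) • φ a₀ : ℂ)).re < u at this
    rw [Complex.smul_re, smul_eq_mul, div_mul_cancel₀ _ hpos.ne'] at this
    exact lt_irrefl _ this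
  have hpos : 0 < (⟪v, π a₀ v⟫_ℂ).re := hu.trans huf
  have hbound : ∀ s : ℝ, 0 < s → 2 * (⟪v, π a₀ v⟫_ℂ).re ≤ 2 * (s * ‖v‖ ^ 2) := by
    intro s hs
    obtain ⟨F, hF⟩ := θ.exists_finset_of_singularCone_le_zero a₀ hle hs
    have hsa : IsSelfAdjoint (a₀ + star a₀ - (2 * s : ℂ) • (1 : A)) := by
      refine (IsSelfAdjoint.add_star_self a₀).sub (IsSelfAdjoint.smul ?_ (.one A))
      simp [isSelfAdjoint_iff]
    obtain ⟨e, d, he, hd, hde, hb⟩ := hsa.exists_sq_sub_sq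
    have hrank : θ.FiniteRank e := by
      refine θ.finiteRank_of_forall_inner_eq_zero F fun x hx => ?_
      have h1 : θ d (θ e x) = 0 := by
        rw [← mul_apply_eq_comp, ← map_mul, hde, map_zero, zero_apply]
      have h2 := θ.re_inner_add_star_sub a₀ s (θ e x)
      rw [hb, map_sub, sub_apply, inner_sub_right, map_mul θ d d, mul_apply_eq_comp, h1, map_zero,
        inner_zero_right, sub_zero, he.inner_apply_mul_self] at h2
      have h3 : ‖θ e (θ e x)‖ ^ 2 ≤ 0 := by
        have h4 : ‖θ e (θ e x)‖ ^ 2 = _ := h2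
        linarith [hF (θ e x) hx]
      have h4 : θ e (θ e x) = 0 := by
        simpa using le_antisymm h3 (sq_nonneg _)
      have h5 := he.inner_apply_mul_self θ x
      rw [map_mul, mul_apply_eq_comp, h4, inner_zero_right] at h5
      simpa using (Complex.ofReal_eq_zero.1 h5.symm)
    have h1 := π.re_inner_add_star_sub a₀ s v
    rw [hb, map_sub, sub_apply, inner_sub_right, he.inner_apply_mul_self, hv e hrank,
      hd.inner_apply_mul_self, Complex.sub_re, Complex.ofReal_re, Complex.ofReal_re,
      norm_zero] at h1
    linarith [sq_nonneg ‖π d v‖]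
  have hlim : Tendsto (fun s : ℝ => 2 * (s * ‖v‖ ^ 2)) (𝓝[>] 0) (𝓝 (2 * (0 * ‖v‖ ^ 2))) :=
    (((continuous_id.mul_const _).const_mul 2).tendsto' 0 _ rfl).mono_left nhdsWithin_le_nhds
  have := ge_of_tendsto hlim (eventually_mem_nhdsWithin.mono hbound)
  linarith

end SingularFunctionals

section Atoms

variable {A H K : Type*} [CStarAlgebra A]
  [NormedAddCommGroup H] [InnerProductSpace ℂ H] [CompleteSpace H]
  [NormedAddCommGroup K] [InnerProductSpace ℂ K] [CompleteSpace K]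

open scoped ComplexStarModule
open Module (finrank)
open Module.End (HasEigenvalue eigenspace)

theorem CRep.finiteRank_mul (θ : CRep A K) {b : A} (hb : θ.FiniteRank b) (c : A) :
    θ.FiniteRank (c * b) ∧ finrank ℂ (LinearMap.range (θ (c * b) : K →ₗ[ℂ] K)) ≤
      finrank ℂ (LinearMap.range (θ b : K →ₗ[ℂ] K)) := by
  have : FiniteDimensional ℂ (LinearMap.range (θ b : K →ₗ[ℂ] K)) := hb
  have h : LinearMap.range (θ (c * b) : K →ₗ[ℂ] K) =
      (LinearMap.range (θ b : K →ₗ[ℂ] K)).map (θ c : K →ₗ[ℂ] K) := by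
    rw [← LinearMap.range_comp, map_mul]
    rfl
  rw [CRep.FiniteRank, h]
  exact ⟨inferInstance, Submodule.finrank_map_le _ _⟩

/-- If no element of smaller rank acts nontrivially on `W`, then selfadjoint elements leaving the
range of `θ q` invariant act on it as scalars. -/
theorem CRep.exists_smul_of_minimal_finrank (π : CRep A H) (θ : CRep A K) {W : Set H} {q : A}
    (hq : θ.FiniteRank q)
    (hmin : ∀ b, θ.FiniteRank b → finrank ℂ (LinearMap.range (θ b : K →ₗ[ℂ] K)) <
      finrank ℂ (LinearMap.range (θ q : K →ₗ[ℂ] K)) → ∀ η ∈ W, π b η = 0)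
    (hne : ∃ η ∈ W, π q η ≠ 0) {a : A} (ha : IsSelfAdjoint a)
    (hinv : ∀ x, ∃ x', θ q x' = θ a (θ q x)) : ∃ ν : ℂ, ∀ x, θ a (θ q x) = ν • θ q x := by
  have : FiniteDimensional ℂ (LinearMap.range (θ q : K →ₗ[ℂ] K)) := hq
  set V := LinearMap.range (θ q : K →ₗ[ℂ] K)
  have hV : ∀ x ∈ V, (θ a : K →ₗ[ℂ] K) x ∈ V := by
    rintro _ ⟨x, rfl⟩
    exact hinv x
  let T : V →ₗ[ℂ] V := (θ a : K →ₗ[ℂ] K).restrict hV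
  have hT : T.IsSymmetric := fun x y => by
    change ⟪θ a x, (y : K)⟫_ℂ = ⟪(x : K), θ a y⟫_ℂ
    rw [CRep.inner_apply_left, ha.star_eq]
  have heig : ∀ ν, HasEigenvalue T ν → ∀ η ∈ W, π a (π q η) = ν • π q η := by
    intro ν hν η hη
    have hle : LinearMap.range (θ ((a - ν • 1) * q) : K →ₗ[ℂ] K) ≤
        (LinearMap.range (T - ν • (1 : V →ₗ[ℂ] V))).map V.subtype := by
      rintro _ ⟨x, rfl⟩
      refine ⟨_, ⟨⟨θ q x, x, rfl⟩, rfl⟩, ?_⟩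
      simp [T, map_sub]
    have hlt : finrank ℂ (LinearMap.range (T - ν • (1 : V →ₗ[ℂ] V))) < finrank ℂ V := by
      have hdim := LinearMap.finrank_range_add_finrank_ker (T - ν • (1 : V →ₗ[ℂ] V))
      have hker : LinearMap.ker (T - ν • (1 : V →ₗ[ℂ] V)) ≠ ⊥ := by
        obtain ⟨x, hx⟩ := hν.exists_hasEigenvector
        refine (Submodule.ne_bot_iff _).2 ⟨x, ?_, hx.2⟩
        simp [hx.apply_eq_smul]
      have := Submodule.one_le_finrank_iff.2 hker
      omega
    have h0 := hmin _ (θ.finiteRank_mul hq _).1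
      (((Submodule.finrank_mono hle).trans (Submodule.finrank_map_le _ _)).trans_lt hlt) η hη
    simpa [map_sub, sub_eq_zero] using h0
  have htop : ⨆ μ, eigenspace T μ = ⊤ :=
    Submodule.orthogonal_eq_bot_iff.1 hT.orthogonalComplement_iSup_eigenspaces_eq_bot
  obtain ⟨η, hη, hne⟩ := hne
  have hν : ∃ ν, ∀ μ, HasEigenvalue T μ → μ = ν := by
    by_cases h : ∃ ν, HasEigenvalue T ν
    · obtain ⟨ν, hν⟩ := h
      exact ⟨ν, fun μ hμ => smul_left_injective ℂ hne
        ((heig μ hμ η hη).symm.trans (heig ν hν η hη))⟩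
    · exact ⟨0, fun μ hμ => absurd ⟨μ, hμ⟩ h⟩
  obtain ⟨ν, hν⟩ := hν
  refine ⟨ν, fun x => ?_⟩
  have hx : (⟨θ q x, x, rfl⟩ : V) ∈ eigenspace T ν := by
    have hle : ⨆ μ, eigenspace T μ ≤ eigenspace T ν := iSup_le fun μ => by
      by_cases hμ : HasEigenvalue T μ
      · rw [hν μ hμ]
      · rw [HasEigenvalue, Module.End.HasUnifEigenvalue, not_not] at hμ
        exact hμ.le.trans bot_le
    exact hle (htop ▸ Submodule.mem_top)
  exact congrArg Subtype.val (Module.End.mem_eigenspace_iff.1 hx)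

/-- An element that acts in `θ` as a finite rank projection which is minimal in the range of `θ`. -/
structure CRep.IsAtom (θ : CRep A K) (q : A) : Prop where
  isSelfAdjoint : IsSelfAdjoint q
  idem : θ (q * q) = θ q
  finiteRank : θ.FiniteRank q
  exists_smul : ∀ a, ∃ c : ℂ, θ (q * a * q) = c • θ q

theorem CRep.exists_isAtom (π : CRep A H) (θ : CRep A K) (hker : ∀ a, θ a = 0 → π a = 0)
    (W : Set H) (h : ∃ b, θ.FiniteRank b ∧ ∃ η ∈ W, π b η ≠ 0) :
    ∃ q, θ.IsAtom q ∧ ∃ η ∈ W, π q η ≠ 0 := by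
  classical
  let P : ℕ → Prop := fun n => ∃ b, θ.FiniteRank b ∧
    finrank ℂ (LinearMap.range (θ b : K →ₗ[ℂ] K)) = n ∧ ∃ η ∈ W, π b η ≠ 0
  have hP : ∃ n, P n := by
    obtain ⟨b, hb, hη⟩ := h
    exact ⟨_, b, hb, rfl, hη⟩
  obtain ⟨b, hb, hbn, η, hη, hne⟩ := Nat.find_spec hP
  obtain ⟨hq, hqn⟩ := θ.finiteRank_mul hb (star b)
  have hsa : IsSelfAdjoint (star b * b) := .star_mul_self b
  have hqη : π (star b * b) η ≠ 0 := fun h0 => hne <| by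
    have := π.norm_sq_apply b η
    rw [h0, inner_zero_right] at this
    simpa using this.symm
  have hmin : ∀ c, θ.FiniteRank c → finrank ℂ (LinearMap.range (θ c : K →ₗ[ℂ] K)) <
      finrank ℂ (LinearMap.range (θ (star b * b) : K →ₗ[ℂ] K)) → ∀ η ∈ W, π c η = 0 := by
    intro c hc hlt η hη
    by_contra h0
    exact Nat.find_min hP (hlt.trans_le (hqn.trans hbn.le)) ⟨c, hc, rfl, η, hη, h0⟩
  generalize star b * b = q at *
  have key := fun {a : A} => π.exists_smul_of_minimal_finrank θ (a := a) hq hmin ⟨η, hη, hqη⟩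
  obtain ⟨ν, hν⟩ := key hsa fun x => ⟨_, rfl⟩
  have hq0 : θ q ≠ 0 := fun h0 => hqη (by rw [hker q h0, zero_apply])
  have hqq : θ (q * q) = ν • θ q := by
    ext x
    simp [hν]
  have hν0 : ν ≠ 0 := by
    rintro rfl
    refine hq0 (ContinuousLinearMap.ext fun x => ?_)
    have := hsa.inner_apply_mul_self θ x
    rw [hqq, zero_smul, zero_apply, inner_zero_right] at this
    simpa using Complex.ofReal_eq_zero.1 this.symm
  have hνr : star ν = ν := by
    refine smul_left_injective ℂ hq0 (?_ : star ν • θ q = ν • θ q)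
    have := congrArg star hqq
    rwa [star_smul, ← map_star, ← map_star, star_mul, hsa.star_eq, hqq, eq_comm] at this
  have hscalar : ∀ a, IsSelfAdjoint a → ∃ c : ℂ, θ (q * a * q) = c • θ q := by
    intro a ha
    obtain ⟨c, hc⟩ := key (a := q * a * q) (by simpa [hsa.star_eq] using ha.conjugate q)
      fun x => ⟨θ (a * q * q) x, by simp⟩
    refine ⟨ν⁻¹ * c, ?_⟩
    rw [mul_smul, eq_inv_smul_iff₀ hν0]
    ext x
    simpa [hν] using hc x
  refine ⟨ν⁻¹ • q, ⟨?_, ?_, ?_, fun a => ?_⟩, η, hη, ?_⟩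
  · exact IsSelfAdjoint.smul (by rw [isSelfAdjoint_iff, star_inv₀, hνr]) hsa
  · rw [smul_mul_smul_comm, map_smul, hqq, map_smul, smul_smul, mul_assoc, inv_mul_cancel₀ hν0,
      mul_one]
  · have := (θ.finiteRank_mul hq (ν⁻¹ • 1)).1
    simpa using this
  · obtain ⟨c, hc⟩ := hscalar (ℜ a) (ℜ a).2
    obtain ⟨d, hd⟩ := hscalar (ℑ a) (ℑ a).2
    refine ⟨ν⁻¹ * (c + Complex.I * d), ?_⟩
    conv_lhs => rw [← realPart_add_I_smul_imaginaryPart a]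
    simp only [smul_mul_assoc, mul_smul_comm, mul_add, add_mul, map_add, map_smul, hc, hd,
      smul_add, smul_smul, ← add_smul]
    congr 1
    ring
  · simpa [hν0] using hqη

theorem CRepPrec.apply_eq_zero {π : CRep A H} {θ : CRep A K} (h : CRepPrec π θ) {a : A}
    (ha : θ a = 0) : π a = 0 := by
  ext x
  by_contra hx
  have hx0 : x ≠ 0 := fun h0 => hx (by rw [h0, map_zero, map_zero])
  have hn : ‖x‖ ≠ 0 := norm_ne_zero_iff.2 hx0
  set ξ : H := ((‖x‖⁻¹ : ℝ) : ℂ) • x with hξ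
  have hξ1 : ‖ξ‖ = 1 := by
    rw [hξ, norm_smul]
    simp [hn]
  have hpos : 0 < ‖π a ξ‖ ^ 2 := by
    have : π a ξ ≠ 0 := by
      rw [hξ, map_smul]
      exact smul_ne_zero (by simpa using hx0) hx
    positivity
  obtain ⟨ζ, -, hζ⟩ := h {star a * a} 1 (fun _ => ξ)
    ⟨fun _ => hξ1, fun i j hij => absurd (Subsingleton.elim i j) hij⟩ _ hpos
  have := hζ _ (Finset.mem_singleton_self _) 0
  rw [map_mul, map_mul, ha, mul_zero, zero_apply, inner_zero_left, sub_zero, map_star,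
    mul_apply_eq_comp, ContinuousLinearMap.star_eq_adjoint,
    ContinuousLinearMap.adjoint_inner_left, inner_self_eq_norm_sq_to_K] at this
  simp at this

theorem CRep.IsAtom.apply_apply {θ : CRep A K} {q : A} (hq : θ.IsAtom q) {x : K}
    (hx : x ∈ LinearMap.range (θ q : K →ₗ[ℂ] K)) : θ q x = x := by
  obtain ⟨x, rfl⟩ := hx
  have := congrArg (fun T : K →L[ℂ] K => T x) hq.idem
  simpa using this

theorem CRepPrec.map_isAtom_idem {π : CRep A H} {θ : CRep A K} (h : CRepPrec π θ) {q : A}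
    (hq : θ.IsAtom q) {x : H} (hx : x ∈ LinearMap.range (π q : H →ₗ[ℂ] H)) : π q x = x := by
  obtain ⟨x, rfl⟩ := hx
  have h0 : π (q * q - q) = 0 := h.apply_eq_zero (by rw [map_sub, hq.idem, sub_self])
  have := congrArg (fun T : H →L[ℂ] H => T x) h0
  simpa [sub_eq_zero] using this

theorem CRepPrec.card_le_finrank {π : CRep A H} {θ : CRep A K} (h : CRepPrec π θ) {q : A}
    (hq : θ.IsAtom q) {n : ℕ} {ξ : Fin n → H} (hξ : Orthonormal ℂ ξ)
    (hξq : ∀ i, ξ i ∈ LinearMap.range (π q : H →ₗ[ℂ] H)) :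
    n ≤ finrank ℂ (LinearMap.range (θ q : K →ₗ[ℂ] K)) := by
  have : FiniteDimensional ℂ (LinearMap.range (θ q : K →ₗ[ℂ] K)) := hq.finiteRank
  obtain ⟨ζ, hζ, hζq⟩ := h {q} n ξ hξ (1 / (n + 1)) (by positivity)
  set V := LinearMap.range (θ q : K →ₗ[ℂ] K)
  let b := stdOrthonormalBasis ℂ V
  have hlow : ∀ i, 1 - 1 / (n + 1 : ℝ) ≤ ‖θ q (ζ i)‖ ^ 2 := by
    intro i
    have h1 := hζq q (Finset.mem_singleton_self q) i
    have h2 : ⟪θ q (ζ i), ζ i⟫_ℂ = ((‖θ q (ζ i)‖ ^ 2 : ℝ) : ℂ) := by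
      rw [← hq.isSelfAdjoint.inner_apply_mul_self, hq.idem, CRep.inner_apply_left,
        hq.isSelfAdjoint.star_eq]
    rw [h.map_isAtom_idem hq (hξq i), inner_self_eq_norm_sq_to_K, hξ.1 i, h2] at h1
    have h3 : ((1 : ℝ) : ℂ) ^ 2 - ((‖θ q (ζ i)‖ ^ 2 : ℝ) : ℂ) =
      ((1 - ‖θ q (ζ i)‖ ^ 2 : ℝ) : ℂ) := by push_cast; ring
    change ‖((1 : ℝ) : ℂ) ^ 2 - ((‖θ q (ζ i)‖ ^ 2 : ℝ) : ℂ)‖ < _ at h1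
    rw [h3, Complex.norm_real] at h1
    linarith [(abs_lt.1 h1).2]
  have hup : ∀ i, ‖θ q (ζ i)‖ ^ 2 = ∑ j, ‖⟪ζ i, (b j : K)⟫_ℂ‖ ^ 2 := by
    intro i
    have h1 := b.sum_sq_norm_inner_left ⟨θ q (ζ i), ζ i, rfl⟩
    rw [Submodule.coe_norm] at h1
    rw [← h1]
    refine Finset.sum_congr rfl fun j _ => ?_
    rw [Submodule.coe_inner, CRep.inner_apply_left, hq.isSelfAdjoint.star_eq,
      hq.apply_apply (b j).2]
  have hsum : (n : ℝ) * (1 - 1 / (n + 1 : ℝ)) ≤ finrank ℂ V :=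
    calc (n : ℝ) * (1 - 1 / (n + 1 : ℝ))
      _ = ∑ _i : Fin n, (1 - 1 / (n + 1 : ℝ)) := by
        rw [Finset.sum_const, Finset.card_univ, Fintype.card_fin, nsmul_eq_mul]
      _ ≤ ∑ i, ∑ j, ‖⟪ζ i, (b j : K)⟫_ℂ‖ ^ 2 :=
        Finset.sum_le_sum fun i _ => (hlow i).trans (hup i).le
      _ = ∑ j, ∑ i, ‖⟪ζ i, (b j : K)⟫_ℂ‖ ^ 2 := Finset.sum_comm
      _ ≤ ∑ j, ‖(b j : K)‖ ^ 2 := Finset.sum_le_sum fun j _ => hζ.sum_inner_products_le _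
      _ = finrank ℂ V := by
        have : ∀ j, ‖(b j : K)‖ = 1 := fun j => b.orthonormal.1 j
        simp [this]
  have hlt : (n : ℝ) < finrank ℂ V + 1 := by
    have : (n : ℝ) * (1 - 1 / (n + 1 : ℝ)) = n - 1 + 1 / (n + 1) := by field_simp; ring
    have h0 : 0 < 1 / ((n : ℝ) + 1) := by positivity
    linarith
  exact Nat.lt_succ_iff.1 (by exact_mod_cast hlt)

theorem CRepPrec.exists_inner_preserving {π : CRep A H} {θ : CRep A K} (h : CRepPrec π θ) {q : A}
    (hq : θ.IsAtom q) : ∃ W : H → K, (∀ y, W y ∈ LinearMap.range (θ q : K →ₗ[ℂ] K)) ∧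
      ∀ y ∈ LinearMap.range (π q : H →ₗ[ℂ] H), ∀ y' ∈ LinearMap.range (π q : H →ₗ[ℂ] H),
        ⟪W y, W y'⟫_ℂ = ⟪y, y'⟫_ℂ := by
  classical
  set V := LinearMap.range (θ q : K →ₗ[ℂ] K)
  set U := LinearMap.range (π q : H →ₗ[ℂ] H)
  have : FiniteDimensional ℂ V := hq.finiteRank
  have hrank : Module.rank ℂ U ≤ finrank ℂ V := by
    refine rank_le fun s hs => ?_
    have hli : LinearIndependent ℂ fun i => ((s.equivFin.symm i : U) : H) :=
      (hs.comp _ s.equivFin.symm.injective).map' U.subtype (Submodule.ker_subtype U)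
    refine h.card_le_finrank hq (InnerProductSpace.gramSchmidtNormed_orthonormal hli) fun i => ?_
    have hle : Submodule.span ℂ (Set.range fun i => ((s.equivFin.symm i : U) : H)) ≤ U :=
      Submodule.span_le.2 (Set.range_subset_iff.2 fun i => (s.equivFin.symm i : U).2)
    rw [← InnerProductSpace.span_gramSchmidt ℂ, ← InnerProductSpace.span_gramSchmidtNormed_range]
      at hle
    exact hle (Submodule.subset_span ⟨i, rfl⟩)
  have : FiniteDimensional ℂ U := Module.rank_lt_aleph0_iff.1
    (hrank.trans_lt (Cardinal.natCast_lt_aleph0))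
  have hle : finrank ℂ U ≤ finrank ℂ V := Module.finrank_le_of_rank_le hrank
  let b := stdOrthonormalBasis ℂ U
  let b' := stdOrthonormalBasis ℂ V
  let W : U → V := fun y => ∑ i, ⟪b i, y⟫_ℂ • b' (Fin.castLE hle i)
  have hW : ∀ y y', ⟪W y, W y'⟫_ℂ = ⟪y, y'⟫_ℂ := by
    intro y y'
    have hon := b'.orthonormal.comp _ (Fin.castLE_injective hle)
    rw [← b.sum_inner_mul_inner]
    refine (hon.inner_sum _ _ Finset.univ).trans (Finset.sum_congr rfl fun i _ => ?_)
    simp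
  refine ⟨fun y => if hy : y ∈ U then (W ⟨y, hy⟩ : K) else 0, fun y => ?_, fun y hy y' hy' => ?_⟩
  · dsimp only
    split_ifs
    exacts [(W _).2, V.zero_mem]
  · simp only [hy, hy', dif_pos]
    exact hW ⟨y, hy⟩ ⟨y', hy'⟩

theorem CRep.inner_apply_eq_of_fixed (ρ : CRep A H) {q q' : A} (hq : IsSelfAdjoint q) {y y' : H}
    (hy : ρ q y = y) (hy' : ρ q' y' = y') (a : A) : ⟪y, ρ a y'⟫_ℂ = ⟪y, ρ (q * a * q') y'⟫_ℂ := by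
  conv_lhs => rw [← hy, ← hy', CRep.inner_apply_left, hq.star_eq]
  simp

/-- The part of `π` generated by the elements of finite rank in `θ` embeds into `θ`. -/
theorem CRepPrec.exists_approxOn {π : CRep A H} {θ : CRep A K} (h : CRepPrec π θ) :
    ∃ G : Set H, CRepApproxOn π θ G ∧ ∀ b, θ.FiniteRank b → ∀ x, π b x ∈ π.cyclicHull G := by
  classical
  obtain ⟨Q, hQ⟩ := zorn_subset {Q : Set A | (∀ q ∈ Q, θ.IsAtom q) ∧
      ∀ q ∈ Q, ∀ q' ∈ Q, q ≠ q' → ∀ a, θ (q * a * q') = 0} <| by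
    intro c hc hchain
    refine ⟨⋃₀ c, ⟨fun q ⟨Q, hQ, hq⟩ => (hc hQ).1 q hq, ?_⟩,
      fun Q hQ => Set.subset_sUnion_of_mem hQ⟩
    rintro q ⟨Q, hQ, hq⟩ q' ⟨Q', hQ', hq'⟩
    rcases hchain.total hQ hQ' with hle | hle
    · exact (hc hQ').2 q (hle hq) q' hq'
    · exact (hc hQ).2 q hq q' (hle hq')
  obtain ⟨hatom, hineq⟩ := hQ.prop
  set G : Set H := {y | ∃ q ∈ Q, y ∈ LinearMap.range (π q : H →ₗ[ℂ] H)}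
  have hGap : CRepApproxOn π θ G := by
    have key : ∀ y, ∃ q, y ∈ G → q ∈ Q ∧ y ∈ LinearMap.range (π q : H →ₗ[ℂ] H) := by
      intro y
      by_cases hy : y ∈ G
      · obtain ⟨q, hq⟩ := hy
        exact ⟨q, fun _ => hq⟩
      · exact ⟨0, fun hy' => absurd hy' hy⟩
    choose q hq using key
    have hWex : ∀ q, ∃ W : H → K, q ∈ Q → (∀ y, W y ∈ LinearMap.range (θ q : K →ₗ[ℂ] K)) ∧
      ∀ y ∈ LinearMap.range (π q : H →ₗ[ℂ] H), ∀ y' ∈ LinearMap.range (π q : H →ₗ[ℂ] H),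
        ⟪W y, W y'⟫_ℂ = ⟪y, y'⟫_ℂ := by
      intro q
      by_cases hq : q ∈ Q
      · obtain ⟨W, hW⟩ := h.exists_inner_preserving (hatom q hq)
        exact ⟨W, fun _ => hW⟩
      · exact ⟨fun _ => 0, fun hq' => absurd hq' hq⟩
    choose W hW using hWex
    refine .of_tendsto (l := (pure () : Filter Unit)) inferInstance (fun _ y => W (q y) y)
      fun a y hy y' hy' => ?_
    obtain ⟨hqQ, hyq⟩ := hq y hy
    obtain ⟨hqQ', hyq'⟩ := hq y' hy'
    have e1 := CRep.inner_apply_eq_of_fixed θ (hatom _ hqQ).isSelfAdjoint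
      ((hatom _ hqQ).apply_apply ((hW _ hqQ).1 y)) ((hatom _ hqQ').apply_apply ((hW _ hqQ').1 y')) a
    have e2 := CRep.inner_apply_eq_of_fixed π (hatom _ hqQ).isSelfAdjoint
      (h.map_isAtom_idem (hatom _ hqQ) hyq) (h.map_isAtom_idem (hatom _ hqQ') hyq') a
    refine tendsto_const_nhds.congr' (Eventually.of_forall fun _ => ?_)
    change ⟪y, π a y'⟫_ℂ = ⟪W (q y) y, θ a (W (q y') y')⟫_ℂ
    rw [e1, e2]
    by_cases hqq : q y = q y'
    · obtain ⟨c, hc⟩ := (hatom _ hqQ).exists_smul a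
      have hc' : π (q y * a * q y - c • q y) = 0 := h.apply_eq_zero (by simp [hc, map_sub])
      rw [map_sub, map_smul, sub_eq_zero] at hc'
      rw [← hqq] at hyq' ⊢
      rw [hc, hc', smul_apply, smul_apply, h.map_isAtom_idem (hatom _ hqQ) hyq',
        (hatom _ hqQ).apply_apply ((hW _ hqQ).1 y'), inner_smul_right, inner_smul_right,
        (hW _ hqQ).2 y hyq y' hyq']
    · have h0 := hineq _ hqQ _ hqQ' hqq a
      rw [h0, h.apply_eq_zero h0]
      simp
  refine ⟨G, hGap, ?_⟩
  set M := π.cyclicHull G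
  have hMc : IsClosed (M : Set H) := π.isClosed_cyclicHull G
  have : CompleteSpace M := hMc.completeSpace_coe
  have hMinv : ∀ b, ∀ η ∈ Mᗮ, π b η ∈ Mᗮ := by
    intro b η hη x hx
    have := hη (π (star b) x) (π.apply_mem_cyclicHull _ hx)
    rwa [CRep.inner_apply_left, star_star] at this
  have hkill : ∀ b, θ.FiniteRank b → ∀ η ∈ Mᗮ, π b η = 0 := by
    by_contra! hcon
    obtain ⟨b, hb, η, hη, hne⟩ := hcon
    obtain ⟨p, hp, η, hη, hne⟩ := π.exists_isAtom θ (fun a => h.apply_eq_zero) (Mᗮ : Set H)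
      ⟨b, hb, η, hη, hne⟩
    have hzero : π p η ∈ M → False := fun hM => hne <| by
      have := hMinv p η hη (π p η) hM
      exact inner_self_eq_zero.1 this
    have hortho : ∀ q ∈ Q, ∀ a, θ (p * a * q) = 0 := by
      intro q hq a
      obtain ⟨c, hc⟩ := hp.exists_smul (a * q * (q * star a))
      have hmul : p * (a * q * (q * star a)) * p = p * a * q * star (p * a * q) := by
        simp [hp.isSelfAdjoint.star_eq, (hatom q hq).isSelfAdjoint.star_eq, mul_assoc]
      by_cases hc0 : c = 0
      · rwa [hmul, hc0, zero_smul, map_mul, map_star, CStarRing.mul_star_self_eq_zero_iff] at hc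
      refine (hzero ?_).elim
      have hπ : π (p * (a * q * (q * star a)) * p - c • p) = 0 :=
        h.apply_eq_zero (by rw [map_sub, hc, map_smul, sub_self])
      rw [map_sub, map_smul, sub_eq_zero, ← inv_smul_eq_iff₀ hc0] at hπ
      rw [← hπ, smul_apply]
      refine M.smul_mem _ ?_
      have hq' : π q (π (q * star a * p) η) ∈ M := π.subset_cyclicHull G ⟨q, hq, _, rfl⟩
      have := π.apply_mem_cyclicHull (p * a) hq'
      simpa [mul_assoc] using this
    have hins : p ∈ Q := by
      refine hQ.le_of_ge (y := insert p Q) ⟨?_, ?_⟩ (Set.subset_insert p Q) (Set.mem_insert p Q)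
      · rintro q (rfl | hq)
        exacts [hp, hatom q hq]
      · rintro q (rfl | hq) q' (rfl | hq') hne a
        · exact absurd rfl hne
        · exact hortho q' hq' a
        · have := congrArg star (hortho q hq (star a))
          rwa [star_zero, ← map_star, star_mul, star_mul, star_star, hp.isSelfAdjoint.star_eq,
            (hatom q hq).isSelfAdjoint.star_eq, ← mul_assoc] at this
        · exact hineq q hq q' hq' hne a
    exact hzero (π.subset_cyclicHull G ⟨p, hins, η, rfl⟩)
  intro b hb x
  have h0 := hkill b hb _ (M.sub_starProjection_mem_orthogonal x)
  rw [map_sub, sub_eq_zero] at h0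
  rw [h0]
  exact π.apply_mem_cyclicHull b (M.starProjection_apply_mem x)

end Atoms

section Perturbation

variable {τ K : Type*} {l : Filter τ} [NormedAddCommGroup K] [InnerProductSpace ℂ K]

theorem Filter.Tendsto.norm_of_sub {E : Type*} [SeminormedAddCommGroup E] {f h : τ → E} {c : ℝ}
    (hf : Tendsto (fun t => ‖f t‖) l (𝓝 c)) (hfh : Tendsto (fun t => h t - f t) l (𝓝 0)) :
    Tendsto (fun t => ‖h t‖) l (𝓝 c) := by
  have h0 : Tendsto (fun t => ‖h t‖ - ‖f t‖) l (𝓝 0) :=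
    squeeze_zero_norm (fun t => abs_norm_sub_norm_le (h t) (f t)) (by simpa using hfh.norm)
  simpa using h0.add hf

theorem tendsto_inner_zero_of_tendsto_norm {x y : τ → K} {c : ℝ} (hx : Tendsto x l (𝓝 0))
    (hy : Tendsto (fun t => ‖y t‖) l (𝓝 c)) : Tendsto (fun t => ⟪x t, y t⟫_ℂ) l (𝓝 0) := by
  refine squeeze_zero_norm (fun t => norm_inner_le_norm (x t) (y t)) ?_
  simpa using hx.norm.mul hy

theorem tendsto_inner_apply_of_tendsto_sub [CompleteSpace K] {f h : τ → K} {c : ℝ} {d : ℂ}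
    (T : K →L[ℂ] K)
    (hf : Tendsto (fun t => ‖f t‖) l (𝓝 c)) (hfh : Tendsto (fun t => h t - f t) l (𝓝 0))
    (hT : Tendsto (fun t => ⟪f t, T (f t)⟫_ℂ) l (𝓝 d)) :
    Tendsto (fun t => ⟪h t, T (h t)⟫_ℂ) l (𝓝 d) := by
  have hTd : Tendsto (fun t => T (h t - f t)) l (𝓝 0) :=
    (T.continuous.tendsto' 0 0 (map_zero T)).comp hfh
  have hTd' : Tendsto (fun t => T.adjoint (h t - f t)) l (𝓝 0) :=
    (T.adjoint.continuous.tendsto' 0 0 (map_zero _)).comp hfh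
  have h1 := (Complex.continuous_conj.tendsto 0).comp (tendsto_inner_zero_of_tendsto_norm hTd hf)
  have h2 := tendsto_inner_zero_of_tendsto_norm hTd' hf
  have h3 := tendsto_inner_zero_of_tendsto_norm hfh hTd.norm
  have h4 := ((hT.add h1).add h2).add h3
  simp only [map_zero, add_zero] at h4
  refine h4.congr fun t => ?_
  simp only [Function.comp_def, inner_conj_symm, ContinuousLinearMap.adjoint_inner_left, map_sub,
    inner_sub_left, inner_sub_right]
  ring

open InnerProductSpace in
theorem tendsto_gramSchmidt_sub {n : ℕ} {f : τ → Fin n → K}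
    (hf : ∀ i j, Tendsto (fun t => ⟪f t i, f t j⟫_ℂ) l (𝓝 (if i = j then 1 else 0)))
    (hnorm : ∀ i, Tendsto (fun t => ‖f t i‖) l (𝓝 1)) (i : Fin n) :
    Tendsto (fun t => gramSchmidt ℂ (f t) i - f t i) l (𝓝 0) := by
  induction i using WellFoundedLT.induction with
  | ind i ih =>
  have hterm : ∀ j ∈ Finset.Iio i, Tendsto
      (fun t => (ℂ ∙ gramSchmidt ℂ (f t) j).starProjection (f t i)) l (𝓝 0) := by
    intro j hj
    have hji : j < i := Finset.mem_Iio.1 hj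
    have hd := ih j hji
    have hn : Tendsto (fun t => ‖gramSchmidt ℂ (f t) j‖) l (𝓝 1) :=
      (hnorm j).norm_of_sub hd
    have hin : Tendsto (fun t => ⟪gramSchmidt ℂ (f t) j, f t i⟫_ℂ) l (𝓝 0) := by
      have := (tendsto_inner_zero_of_tendsto_norm hd (hnorm i)).add (hf j i)
      rw [if_neg hji.ne, add_zero] at this
      refine this.congr fun t => ?_
      rw [inner_sub_left, sub_add_cancel]
    rw [tendsto_zero_iff_norm_tendsto_zero]
    have hlim := (hin.norm.div (hn.pow 2) (by simp)).mul hn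
    simp only [norm_zero, zero_div, zero_mul] at hlim
    refine hlim.congr fun t => ?_
    rw [Submodule.starProjection_singleton, norm_smul, norm_div]
    simp
  have hsum := (tendsto_finsetSum _ hterm).neg
  simp only [Finset.sum_const_zero, neg_zero] at hsum
  refine hsum.congr fun t => ?_
  rw [gramSchmidt_def, sub_sub_cancel_left]

end Perturbation

section DirectSum

variable {A H K : Type*} [CStarAlgebra A]
  [NormedAddCommGroup H] [InnerProductSpace ℂ H] [CompleteSpace H]
  [NormedAddCommGroup K] [InnerProductSpace ℂ K] [CompleteSpace K]
  {π : CRep A H} {θ : CRep A K}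

theorem CRepApproxOn.univ_of_finset (h : ∀ F : Finset H, CRepApproxOn π θ (F : Set H)) :
    CRepApproxOn π θ Set.univ := by
  classical
  choose l hl h using h
  refine ⟨(atTop : Filter (Finset H)).bind l, ⟨fun hbot => ?_⟩, fun a x _ x' _ => ?_⟩
  · have h0 : ∀ᶠ _ in (atTop : Filter (Finset H)).bind l, False := by
      rw [hbot]
      exact eventually_bot
    obtain ⟨F, hF⟩ := (eventually_bind.1 h0).exists
    exact hF.exists.elim fun _ => id
  · rw [tendsto_nhds]
    intro s hs hx
    refine eventually_bind.2 ?_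
    filter_upwards [eventually_ge_atTop {x, x'}] with F hF
    exact (h F a x (hF (by simp)) x' (hF (by simp))).eventually (hs.mem_nhds hx)

theorem CRepPrec.approxOn_univ (h : CRepPrec π θ) : CRepApproxOn π θ Set.univ := by
  classical
  obtain ⟨G, hG, hrange⟩ := h.exists_approxOn
  suffices hF : ∀ F : Finset H, CRepApproxOn π θ (G ∪ F) from
    .univ_of_finset fun F => (hF F).mono Set.subset_union_right
  intro F
  induction F using Finset.induction_on with
  | empty => simpa using hG
  | insert x F _ ih =>
    set M := π.cyclicHull (G ∪ F)
    have hMc : IsClosed (M : Set H) := π.isClosed_cyclicHull _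
    have : CompleteSpace M := hMc.completeSpace_coe
    have hη : x - M.starProjection x ∈ Mᗮ := M.sub_starProjection_mem_orthogonal x
    set η := x - M.starProjection x with hηdef
    have hGM : π.cyclicHull G ≤ M := π.cyclicHull_le hMc fun b s hs =>
      π.apply_mem_cyclicHull b (π.subset_cyclicHull _ (Or.inl hs))
    have hkill : ∀ b, θ.FiniteRank b → π b η = 0 := fun b hb => by
      have h0 := Submodule.inner_left_of_mem_orthogonal
        (hGM (hrange _ (θ.finiteRank_mul hb (star b)).1 η)) hη
      rw [π.norm_sq_apply] at h0
      simpa using h0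
    obtain ⟨m, hm, hnull, hlim⟩ := π.vectorFunctional_mem_singularCone θ η hkill
    have happ := ih.cyclicHull.insert (v := η)
      (fun a y hy => by
        have := hη (π (star a) y) (π.apply_mem_cyclicHull _ hy)
        rwa [CRep.inner_apply_left, star_star] at this)
      hm hnull (WeakDual.tendsto_iff.1 hlim)
    refine happ.cyclicHull.mono ?_
    have hsub := π.subset_cyclicHull (insert η (M : Set H))
    intro z hz
    by_cases hzx : z = x
    · have hsum : z = η + M.starProjection x := by rw [hzx, hηdef, sub_add_cancel]
      rw [hsum]
      exact Submodule.add_mem _ (hsub (Set.mem_insert _ _))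
        (hsub (Set.mem_insert_of_mem _ (M.starProjection_apply_mem x)))
    · refine hsub (Set.mem_insert_of_mem _ (π.subset_cyclicHull _ ?_))
      simpa [hzx] using hz

theorem CRepApproxOn.prec (h : CRepApproxOn π θ Set.univ) : CRepPrec π θ := by
  classical
  intro Ω n ξ hξ ε hε
  obtain ⟨l, hl, h⟩ := h
  have h := fun a x x' => h a x trivial x' trivial
  let f : (H → K) → Fin n → K := fun y i => y (ξ i)
  have hgram : ∀ i j, Tendsto (fun y => ⟪f y i, f y j⟫_ℂ) l (𝓝 (if i = j then 1 else 0)) := by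
    intro i j
    simpa [orthonormal_iff_ite.1 hξ i j] using h 1 (ξ i) (ξ j)
  have hnorm : ∀ i, Tendsto (fun y => ‖f y i‖) l (𝓝 1) := by
    intro i
    have := (hgram i i).norm.sqrt
    simp only [if_true, norm_one, Real.sqrt_one] at this
    refine this.congr fun y => ?_
    rw [inner_self_eq_norm_sq_to_K]
    simp
  let g : (H → K) → Fin n → K := fun y => InnerProductSpace.gramSchmidt ℂ (f y)
  have hgf : ∀ i, Tendsto (fun y => g y i - f y i) l (𝓝 0) := tendsto_gramSchmidt_sub hgram hnorm
  have hgnorm : ∀ i, Tendsto (fun y => ‖g y i‖) l (𝓝 1) := fun i => (hnorm i).norm_of_sub (hgf i)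
  let e : (H → K) → Fin n → K := fun y i => ((‖g y i‖⁻¹ : ℝ) : ℂ) • g y i
  have heg : ∀ i, Tendsto (fun y => e y i - g y i) l (𝓝 0) := by
    intro i
    rw [tendsto_zero_iff_norm_tendsto_zero]
    have hlim := (((hgnorm i).inv₀ one_ne_zero).sub_const 1).norm.mul (hgnorm i)
    simp only [inv_one, sub_self, norm_zero, zero_mul] at hlim
    refine hlim.congr fun y => ?_
    have : e y i - g y i = ((‖g y i‖⁻¹ - 1 : ℝ) : ℂ) • g y i := by
      rw [Complex.ofReal_sub, Complex.ofReal_one, sub_smul, one_smul]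
    rw [this, norm_smul, Complex.norm_real]
  have hef : ∀ i, Tendsto (fun y => e y i - f y i) l (𝓝 0) := by
    intro i
    simpa using (heg i).add (hgf i)
  have hlim : ∀ a i, Tendsto (fun y => ⟪e y i, θ a (e y i)⟫_ℂ) l (𝓝 ⟪ξ i, π a (ξ i)⟫_ℂ) :=
    fun a i => tendsto_inner_apply_of_tendsto_sub (θ a) (hnorm i) (hef i) (h a (ξ i) (ξ i))
  have hon : ∀ᶠ y in l, Orthonormal ℂ (e y) := by
    have hne : ∀ᶠ y in l, ∀ i, g y i ≠ 0 := by
      rw [eventually_all]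
      intro i
      filter_upwards [(hgnorm i).eventually_ne one_ne_zero] with y hy
      exact norm_ne_zero_iff.1 hy
    filter_upwards [hne] with y hy
    refine ⟨fun i => ?_, fun i j hij => ?_⟩
    · rw [norm_smul, Complex.norm_real, norm_inv, norm_norm,
        inv_mul_cancel₀ (norm_ne_zero_iff.2 (hy i))]
    · dsimp only [e]
      rw [inner_smul_left, inner_smul_right, InnerProductSpace.gramSchmidt_orthogonal ℂ (f y) hij,
        mul_zero, mul_zero]
  have hclose : ∀ᶠ y in l, ∀ a ∈ Ω, ∀ i,
      dist ⟪e y i, θ a (e y i)⟫_ℂ ⟪ξ i, π a (ξ i)⟫_ℂ < ε := by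
    refine (Finset.eventually_all Ω).2 fun a _ => eventually_all.2 fun i => ?_
    exact (hlim a i).eventually (Metric.ball_mem_nhds _ hε)
  obtain ⟨y, hy, hyε⟩ := (hon.and hclose).exists
  refine ⟨e y, hy, fun a ha i => ?_⟩
  have := hyε a ha i
  rwa [dist_comm, dist_eq_norm, ← inner_conj_symm, ← inner_conj_symm (e y i), ← map_sub,
    RCLike.norm_conj] at this

end DirectSum

/-- weak containment `≺` is compatible with countable direct sums: if
`π_i ≺ θ_i` for every `i` in a countable index set, then `⊕ᵢ π_i ≺ ⊕ᵢ θ_i`. -/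
theorem prec_directSum_of_prec
    {A : Type*} [CStarAlgebra A] {ι : Type*} [Countable ι]
    {Hs Ks : ι → Type*}
    [∀ i, NormedAddCommGroup (Hs i)] [∀ i, InnerProductSpace ℂ (Hs i)]
    [∀ i, CompleteSpace (Hs i)]
    [∀ i, NormedAddCommGroup (Ks i)] [∀ i, InnerProductSpace ℂ (Ks i)]
    [∀ i, CompleteSpace (Ks i)]
    {HH KK : Type*} [NormedAddCommGroup HH] [InnerProductSpace ℂ HH] [CompleteSpace HH]
    [NormedAddCommGroup KK] [InnerProductSpace ℂ KK] [CompleteSpace KK]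
    (π : ∀ i, CRep A (Hs i)) (θ : ∀ i, CRep A (Ks i))
    (hprec : ∀ i, CRepPrec (π i) (θ i))
    (σH : CRep A HH) (uH : ∀ i, Hs i →ₗᵢ[ℂ] HH) (hσH : IsDirectSumRep σH π uH)
    (σK : CRep A KK) (uK : ∀ i, Ks i →ₗᵢ[ℂ] KK) (hσK : IsDirectSumRep σK θ uK) :
    CRepPrec σH σK := by
  refine CRepApproxOn.prec ?_
  choose l hl h using fun i => (hprec i).approxOn_univ
  have hpair : ∀ a i x j x', Tendsto (fun t : ∀ i, Hs i → Ks i =>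
      ⟪uK i (t i x), σK a (uK j (t j x'))⟫_ℂ) (Filter.pi l) (𝓝 ⟪uH i x, σH a (uH j x')⟫_ℂ) := by
    intro a i x j x'
    simp only [hσK.2.2, hσH.2.2]
    by_cases hij : i = j
    · subst hij
      simp only [LinearIsometry.inner_map_map]
      exact (h i a x trivial x' trivial).comp (tendsto_eval_pi l i)
    · simp only [hσK.1 i j hij, hσH.1 i j hij]
      exact tendsto_const_nhds
  have happ : CRepApproxOn σH σK (⋃ i, Set.range (uH i)) := by
    have key : ∀ z, ∃ F : (∀ i, Hs i → Ks i) → KK, z ∈ ⋃ i, Set.range (uH i) →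
        ∃ i x, uH i x = z ∧ F = fun t => uK i (t i x) := by
      intro z
      by_cases hz : z ∈ ⋃ i, Set.range (uH i)
      · obtain ⟨i, x, hx⟩ := Set.mem_iUnion.1 hz
        exact ⟨_, fun _ => ⟨i, x, hx, rfl⟩⟩
      · exact ⟨fun _ => 0, fun hz' => absurd hz' hz⟩
    choose F hF using key
    refine .of_tendsto (l := Filter.pi l) inferInstance (fun t z => F z t) fun a z hz z' hz' => ?_
    obtain ⟨i, x, hx, hFz⟩ := hF z hz
    obtain ⟨j, x', hx', hFz'⟩ := hF z' hz'
    rw [hFz, hFz', ← hx, ← hx']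
    exact hpair a i x j x'
  refine happ.cyclicHull.mono fun z _ => ?_
  have hle : (⨆ i, LinearMap.range (uH i).toLinearMap).topologicalClosure ≤
      σH.cyclicHull (⋃ i, Set.range (uH i)) := by
    refine Submodule.topologicalClosure_minimal _ (iSup_le fun i => ?_) (σH.isClosed_cyclicHull _)
    rintro _ ⟨x, rfl⟩
    exact σH.subset_cyclicHull _ (Set.mem_iUnion.2 ⟨i, x, rfl⟩)
  exact hle (hσH.2.1 ▸ Submodule.mem_top)
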